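/- For every integer m ≥ 0 and every r > 0: A_t[Q](r) = (1/2)·Q(r)², and Q is a static solution of the self-dual Chern–Simons–Schrödinger equation, i.e. −A_t[Q](r)·Q(r) + Q''(r) + (1/r)·Q'(r) − ((m + A_θ[Q](r))/r)²·Q(r) + Q(r)³ = 0. -/

import Mathlib

open MeasureTheory Set Filter

noncomputable section

/-- The Jackiw–Pi vortex `Q(r) = √8 (m+1) r^m / (1 + r^(2m+2))`. -/
def Q (m : ℕ) (r : ℝ) : ℝ :=
  Real.sqrt 8 * (m + 1) * r ^ m / (1 + r ^ (2 * m + 2))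

/-- `A_θ[u](r) = -(1/2) ∫₀^r |u(r')|² r' dr'`. -/
def Atheta (u : ℝ → ℂ) (r : ℝ) : ℝ :=
  -(1 / 2) * ∫ s in (0:ℝ)..r, ‖u s‖ ^ 2 * s

/-- Bilinear version `A_θ[f,g](r) = -(1/2) ∫₀^r Re(conj f g) r' dr'`. -/
def Atheta2 (f g : ℝ → ℂ) (r : ℝ) : ℝ :=
  -(1 / 2) * ∫ s in (0:ℝ)..r, ((starRingEnd ℂ) (f s) * g s).re * s

/-- `A_t[u](r) = -∫_r^∞ (m + A_θ[u](r')) |u(r')|² / r' dr'`. -/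
def At (m : ℕ) (u : ℝ → ℂ) (r : ℝ) : ℝ :=
  -∫ s in Set.Ioi r, ((m : ℝ) + Atheta u s) * ‖u s‖ ^ 2 / s

/-- Squared (2D radial) `L²` norm: `‖u‖² = 2π ∫₀^∞ |u(r)|² r dr`. -/
def L2sq (u : ℝ → ℂ) : ℝ :=
  2 * Real.pi * ∫ r in Set.Ioi (0:ℝ), ‖u r‖ ^ 2 * r

/-- Squared equivariant `Ḣ¹_m` norm. -/
def H1msq (m : ℕ) (u : ℝ → ℂ) : ℝ :=
  2 * Real.pi * ∫ r in Set.Ioi (0:ℝ), (‖deriv u r‖ ^ 2 + (m : ℝ) ^ 2 * ‖u r‖ ^ 2 / r ^ 2) * r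

/-- The energy functional. -/
def Energy (m : ℕ) (u : ℝ → ℂ) : ℝ :=
  2 * Real.pi * ∫ r in Set.Ioi (0:ℝ),
    ((1 / 2) * ‖deriv u r‖ ^ 2
      + (1 / 2) * (((m : ℝ) + Atheta u r) / r) ^ 2 * ‖u r‖ ^ 2
      - (1 / 4) * ‖u r‖ ^ 4) * r

/-- The Chern–Simons–Schrödinger equation at the point `(t, r)`:
`i ∂_t u - A_t[u] u + ∂_r² u + (1/r) ∂_r u - ((m + A_θ[u])/r)² u + |u|² u = 0`. -/
def CSSeq (m : ℕ) (u : ℝ → ℝ → ℂ) (t r : ℝ) : Prop :=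
  Complex.I * deriv (fun s => u s r) t
    - (At m (u t) r : ℂ) * u t r
    + deriv (deriv (u t)) r
    + (1 / (r : ℂ)) * deriv (u t) r
    - ((((m : ℝ) + Atheta (u t) r) / r : ℝ) : ℂ) ^ 2 * u t r
    + ((‖u t r‖ : ℝ) : ℂ) ^ 2 * u t r = 0

/-- A classical `m`-equivariant solution of CSS on the open interval `I`. -/
structure IsCSS (m : ℕ) (I : Set ℝ) (u : ℝ → ℝ → ℂ) : Prop where
  smooth : ContDiffOn ℝ (⊤ : ℕ∞) (fun p : ℝ × ℝ => u p.1 p.2) (I ×ˢ Set.Ioi (0:ℝ))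
  integrable : ∀ t ∈ I, IntegrableOn (fun r => ‖u t r‖ ^ 2 * r) (Set.Ioi (0:ℝ))
  equivariant : ∃ U : ℝ → ℝ × ℝ → ℂ,
    ContDiffOn ℝ (⊤ : ℕ∞) (fun p : ℝ × (ℝ × ℝ) => U p.1 p.2) (I ×ˢ (Set.univ : Set (ℝ × ℝ))) ∧
    ∀ t ∈ I, ∀ x : ℝ × ℝ, x ≠ 0 →
      U t x = u t (Real.sqrt (x.1 ^ 2 + x.2 ^ 2)) *
        (((x.1 : ℂ) + (x.2 : ℂ) * Complex.I) / ((Real.sqrt (x.1 ^ 2 + x.2 ^ 2) : ℝ) : ℂ)) ^ m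
  bounded : ∀ J : Set ℝ, J ⊆ I → IsCompact J → ∃ C : ℝ, ∀ t ∈ J,
    Real.sqrt (L2sq (u t)) + Real.sqrt (H1msq m (u t)) ≤ C
  eq : ∀ t ∈ I, ∀ r : ℝ, 0 < r → CSSeq m u t r

/-- Tightness: uniformly small mass near spatial infinity. -/
def Tight (I : Set ℝ) (u : ℝ → ℝ → ℂ) : Prop :=
  ∀ η : ℝ, 0 < η → ∃ R : ℝ, ∀ t ∈ I,
    2 * Real.pi * ∫ r in Set.Ioi R, ‖u t r‖ ^ 2 * r < η

/-- The real inner product `(f,g)_r = Re (2π ∫₀^∞ f conj(g) r dr)`. -/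
def iprod (f g : ℝ → ℂ) : ℝ :=
  2 * Real.pi * (∫ r in Set.Ioi (0:ℝ), f r * (starRingEnd ℂ) (g r) * (r : ℂ)).re

/-- `ΛQ = r Q' + Q`. -/
def LamQ (m : ℕ) (r : ℝ) : ℝ := r * deriv (Q m) r + Q m r

/-- The linearized Bogomol'nyi operator `L_Q`. -/
def LQ (m : ℕ) (f : ℝ → ℂ) (r : ℝ) : ℂ :=
  deriv f r - ((((m : ℝ) + Atheta (fun s => (Q m s : ℂ)) r) / r : ℝ) : ℂ) * f r
    - ((2 * Atheta2 (fun s => (Q m s : ℂ)) f r / r : ℝ) : ℂ) * (Q m r : ℂ)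

end

/-!
The vortex solves the first-order self-dual (Bogomol'nyi) equation `u' = ((m + A_θ[u]) / r) u`, and
both claims hold for every solution of finite charge. Indeed `(|u|² / 2)' = (m + A_θ[u]) |u|² / r`
is the integrand of `A_t`. Finite charge makes `|u|²` and this derivative integrable near infinity,
so `u` vanishes there and `A_t[u] = |u|² / 2`. Differentiating the equation once more, with
`A_θ' = -|u|² r / 2`, gives `u'' + u' / r = ((m + A_θ[u]) / r)² u - |u|² u / 2`.
-/

open scoped Topology

/-- The self-dual (Bogomol'nyi) equation `u' = ((m + A_θ[u]) / r) u` on `(0, ∞)`, the first-order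
equation behind static solutions of Chern–Simons–Schrödinger. Differentiability of `u` on `(0, ∞)`
is part of the definition. -/
def IsBogomolnyi (m : ℕ) (u : ℝ → ℂ) : Prop :=
  ∀ r, 0 < r → HasDerivAt u (((m + Atheta u r) / r) • u r) r

theorem isBogomolnyi_ofReal_iff {m : ℕ} {q : ℝ → ℝ} :
    IsBogomolnyi m (fun s => (q s : ℂ)) ↔
      ∀ r, 0 < r → HasDerivAt q ((m + Atheta (fun s => (q s : ℂ)) r) / r * q r) r := by
  refine forall₂_congr fun r _ => ⟨fun h => ?_, fun h => ?_⟩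
  · simpa using! Complex.reCLM.hasFDerivAt.comp_hasDerivAt r h
  · simpa only [Complex.ofReal_mul, Complex.real_smul] using h.ofReal_comp

theorem deriv_deriv_add_inv_smul_deriv {E : Type*} [NormedAddCommGroup E] [NormedSpace ℝ E]
    {u : ℝ → E} {a : ℝ → ℝ} {a' r : ℝ} (hr : r ≠ 0)
    (hu : ∀ᶠ s in 𝓝 r, HasDerivAt u ((a s / s) • u s) s) (ha : HasDerivAt a a' r) :
    deriv (deriv u) r + (1 / r) • deriv u r = ((a r / r) ^ 2 + a' / r) • u r := by
  have hu' : deriv u =ᶠ[𝓝 r] fun s => (a s / s) • u s := hu.mono fun s hs => hs.deriv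
  have hu'' := (ha.fun_div (hasDerivAt_id' r) hr).fun_smul hu.self_of_nhds
  rw [hu'.deriv_eq, hu''.deriv, hu'.eq_of_nhds]
  match_scalars
  field_simp
  ring

section FiniteCharge

variable {m : ℕ} {u : ℝ → ℂ} {r : ℝ}

theorem abs_Atheta_le (hu : IntegrableOn (fun s => ‖u s‖ ^ 2 * s) (Ioi 0)) (hr : 0 ≤ r) :
    |Atheta u r| ≤ 1 / 2 * ∫ s in Ioi (0 : ℝ), ‖u s‖ ^ 2 * s := by
  have density_nonneg : ∀ s ∈ Ioi (0 : ℝ), 0 ≤ ‖u s‖ ^ 2 * s :=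
    fun s hs => mul_nonneg (sq_nonneg _) (le_of_lt hs)
  have charge_nonneg : 0 ≤ ∫ s in Ioc 0 r, ‖u s‖ ^ 2 * s :=
    setIntegral_nonneg measurableSet_Ioc fun s hs => density_nonneg s hs.1
  rw [Atheta, intervalIntegral.integral_of_le hr, abs_mul, abs_of_nonneg charge_nonneg, abs_neg,
    abs_of_pos one_half_pos]
  gcongr
  · exact ae_restrict_of_forall_mem measurableSet_Ioi density_nonneg
  · exact fun s hs => hs.1

theorem hasDerivAt_Atheta (hu : IntegrableOn (fun s => ‖u s‖ ^ 2 * s) (Ioi 0)) (hr : 0 < r)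
    (hc : ContinuousAt u r) : HasDerivAt (Atheta u) (-(1 / 2) * (‖u r‖ ^ 2 * r)) r := by
  refine (intervalIntegral.integral_hasDerivAt_right ?_ ?_ (by fun_prop)).const_mul _
  · exact (intervalIntegrable_iff_integrableOn_Ioc_of_le hr.le).2 (hu.mono_set fun s hs => hs.1)
  · exact ⟨Ioi 0, Ioi_mem_nhds hr, hu.aestronglyMeasurable⟩

theorem integrableOn_norm_sq_Ioi (hu : IntegrableOn (fun s => ‖u s‖ ^ 2 * s) (Ioi 0))
    (hr : 0 < r) : IntegrableOn (fun s => ‖u s‖ ^ 2) (Ioi r) := by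
  have inv_le : ∀ s ∈ Ioi r, ‖s⁻¹‖ ≤ r⁻¹ := fun s hs => by
    rw [norm_inv, Real.norm_of_nonneg (hr.trans hs).le]
    exact inv_anti₀ hr (le_of_lt hs)
  have hint : IntegrableOn (fun s => s⁻¹ * (‖u s‖ ^ 2 * s)) (Ioi r) :=
    (hu.mono_set (Ioi_subset_Ioi hr.le)).bdd_mul measurable_inv.aestronglyMeasurable
      (ae_restrict_of_forall_mem measurableSet_Ioi inv_le)
  refine hint.congr_fun (fun s hs => ?_) measurableSet_Ioi
  have : s ≠ 0 := (hr.trans hs).ne'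
  field_simp

variable (m) in
theorem integrableOn_At_integrand (hu : IntegrableOn (fun s => ‖u s‖ ^ 2 * s) (Ioi 0))
    (hc : ContinuousOn u (Ioi 0)) (hr : 0 < r) :
    IntegrableOn (fun s => (m + Atheta u s) * ‖u s‖ ^ 2 / s) (Ioi r) := by
  have coeff_cont : ContinuousOn (fun s => (m + Atheta u s) / s) (Ioi r) := fun s hs => by
    have hs : 0 < s := hr.trans hs
    have := (hasDerivAt_Atheta hu hs (hc.continuousAt (Ioi_mem_nhds hs))).continuousAt
    exact ((continuousAt_const.add this).div continuousAt_id hs.ne').continuousWithinAt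
  have coeff_le : ∀ s ∈ Ioi r, ‖(m + Atheta u s) / s‖ ≤
      (m + 1 / 2 * ∫ s in Ioi (0 : ℝ), ‖u s‖ ^ 2 * s) / r := fun s hs => by
    have hs' : 0 < s := hr.trans hs
    have numerator_le : |m + Atheta u s| ≤ m + 1 / 2 * ∫ s in Ioi (0 : ℝ), ‖u s‖ ^ 2 * s :=
      (abs_add_le _ _).trans (add_le_add (Nat.abs_cast m).le (abs_Atheta_le hu hs'.le))
    rw [norm_div, Real.norm_eq_abs, Real.norm_of_nonneg hs'.le]
    exact div_le_div₀ ((abs_nonneg _).trans numerator_le) numerator_le hr (le_of_lt hs)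
  simp only [mul_div_right_comm]
  exact (integrableOn_norm_sq_Ioi hu hr).bdd_mul
    (coeff_cont.aestronglyMeasurable measurableSet_Ioi)
    (ae_restrict_of_forall_mem measurableSet_Ioi coeff_le)

namespace IsBogomolnyi

theorem continuousOn (h : IsBogomolnyi m u) : ContinuousOn u (Ioi 0) :=
  fun s hs => (h s hs).continuousAt.continuousWithinAt

theorem hasDerivAt_norm_sq (h : IsBogomolnyi m u) (hr : 0 < r) :
    HasDerivAt (fun s => ‖u s‖ ^ 2) (2 * ((m + Atheta u r) * ‖u r‖ ^ 2 / r)) r := by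
  refine (h r hr).norm_sq.congr_deriv ?_
  rw [real_inner_smul_right, real_inner_self_eq_norm_sq]
  ring

theorem At_eq_half_norm_sq (h : IsBogomolnyi m u)
    (hu : IntegrableOn (fun s => ‖u s‖ ^ 2 * s) (Ioi 0)) (hr : 0 < r) :
    At m u r = 1 / 2 * ‖u r‖ ^ 2 := by
  have hderiv : ∀ s ∈ Ici r, HasDerivAt (fun s => ‖u s‖ ^ 2)
      (2 * ((m + Atheta u s) * ‖u s‖ ^ 2 / s)) s :=
    fun s hs => h.hasDerivAt_norm_sq (hr.trans_le hs)
  have hint := (integrableOn_At_integrand m hu h.continuousOn hr).const_mul 2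
  have hlim : Tendsto (fun s => ‖u s‖ ^ 2) atTop (𝓝 0) :=
    tendsto_zero_of_hasDerivAt_of_integrableOn_Ioi (fun s hs => hderiv s (Ioi_subset_Ici_self hs))
      hint (integrableOn_norm_sq_Ioi hu hr)
  have hftc := integral_Ioi_of_hasDerivAt_of_tendsto' hderiv hint hlim
  rw [integral_const_mul] at hftc
  rw [At]
  linarith

end IsBogomolnyi

end FiniteCharge

section Vortex

variable (m : ℕ) (r : ℝ)

theorem one_add_pow_two_mul_add_two_pos : 0 < 1 + r ^ (2 * m + 2) :=
  add_pos_of_pos_of_nonneg one_pos (Even.pow_nonneg ⟨m + 1, by ring⟩ r)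

theorem hasDerivAt_one_add_pow_two_mul_add_two :
    HasDerivAt (fun s : ℝ => 1 + s ^ (2 * m + 2)) (2 * (m + 1) * r ^ (2 * m + 1)) r := by
  refine ((hasDerivAt_pow (2 * m + 2) r).const_add 1).congr_deriv ?_
  push_cast
  ring_nf

theorem Q_sq : Q m r ^ 2 = 8 * (m + 1) ^ 2 * r ^ (2 * m) / (1 + r ^ (2 * m + 2)) ^ 2 := by
  rw [Q, div_pow, mul_pow, mul_pow, Real.sq_sqrt (by norm_num), ← pow_mul, mul_comm m 2]

theorem hasDerivAt_Q_charge_primitive :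
    HasDerivAt (fun s : ℝ => -(4 * (m + 1)) / (1 + s ^ (2 * m + 2))) (‖(Q m r : ℂ)‖ ^ 2 * r) r := by
  have hD := (one_add_pow_two_mul_add_two_pos m r).ne'
  refine ((hasDerivAt_const r _).fun_div (hasDerivAt_one_add_pow_two_mul_add_two m r)
    hD).congr_deriv ?_
  rw [Complex.norm_real, Real.norm_eq_abs, sq_abs, Q_sq]
  field_simp
  ring

theorem integrableOn_Q_charge : IntegrableOn (fun s => ‖(Q m s : ℂ)‖ ^ 2 * s) (Ioi 0) := by
  refine integrableOn_Ioi_deriv_of_nonneg' (l := 0) (fun s _ => hasDerivAt_Q_charge_primitive m s)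
    (fun s hs => mul_nonneg (sq_nonneg _) (le_of_lt hs)) ?_
  exact (tendsto_atTop_add_const_left _ _ (tendsto_pow_atTop (by lia))).const_div_atTop _

variable {r}

theorem Atheta_Q (hr : 0 ≤ r) : Atheta (fun s => (Q m s : ℂ)) r =
    -(2 * (m + 1)) * r ^ (2 * m + 2) / (1 + r ^ (2 * m + 2)) := by
  have hD := (one_add_pow_two_mul_add_two_pos m r).ne'
  have hint : IntervalIntegrable (fun s => ‖(Q m s : ℂ)‖ ^ 2 * s) volume 0 r :=
    (intervalIntegrable_iff_integrableOn_Ioc_of_le hr).2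
      ((integrableOn_Q_charge m).mono_set fun s hs => hs.1)
  rw [Atheta, intervalIntegral.integral_eq_sub_of_hasDerivAt
    (fun s _ => hasDerivAt_Q_charge_primitive m s) hint, zero_pow (by lia)]
  field_simp
  ring

theorem hasDerivAt_Q (hr : 0 < r) :
    HasDerivAt (Q m) ((m + Atheta (fun s => (Q m s : ℂ)) r) / r * Q m r) r := by
  have hD := (one_add_pow_two_mul_add_two_pos m r).ne'
  have hpow : (m : ℝ) * r ^ (m - 1) = m * r ^ m / r := by
    rcases m with _ | k
    · simp
    · rw [Nat.add_sub_cancel, pow_succ, ← mul_assoc, mul_div_cancel_right₀ _ hr.ne']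
  refine (((hasDerivAt_pow m r).const_mul (Real.sqrt 8 * (m + 1))).fun_div
    (hasDerivAt_one_add_pow_two_mul_add_two m r) hD).congr_deriv ?_
  rw [Atheta_Q m hr.le, hpow, Q]
  field_simp
  ring

theorem isBogomolnyi_Q : IsBogomolnyi m fun s => (Q m s : ℂ) :=
  isBogomolnyi_ofReal_iff.2 fun _ hr => hasDerivAt_Q m hr

end Vortex

theorem stmt3_general {m : ℕ} {q : ℝ → ℝ} {r : ℝ} (h : IsBogomolnyi m fun s => (q s : ℂ))
    (hq : IntegrableOn (fun s => ‖(q s : ℂ)‖ ^ 2 * s) (Ioi 0)) (hr : 0 < r) :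
    At m (fun s => (q s : ℂ)) r = (1 / 2) * q r ^ 2 ∧
    -(At m (fun s => (q s : ℂ)) r) * q r + deriv (deriv q) r
      + (1 / r) * deriv q r
      - (((m : ℝ) + Atheta (fun s => (q s : ℂ)) r) / r) ^ 2 * q r
      + q r ^ 3 = 0 := by
  have hnorm : ‖(q r : ℂ)‖ ^ 2 = q r ^ 2 := by
    rw [Complex.norm_real, Real.norm_eq_abs, sq_abs]
  have hAt : At m (fun s => (q s : ℂ)) r = (1 / 2) * q r ^ 2 := by
    rw [h.At_eq_half_norm_sq hq hr, hnorm]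
  have hAtheta := (hasDerivAt_Atheta hq hr (h r hr).continuousAt).const_add (m : ℝ)
  have hlaplacian := deriv_deriv_add_inv_smul_deriv hr.ne'
    ((lt_mem_nhds hr).mono fun s hs => isBogomolnyi_ofReal_iff.1 h s hs) hAtheta
  rw [hnorm, ← mul_assoc, mul_div_cancel_right₀ _ hr.ne'] at hlaplacian
  simp only [smul_eq_mul] at hlaplacian
  refine ⟨hAt, ?_⟩
  rw [hAt]
  linear_combination hlaplacian

/-- `A_t[Q] = (1/2) Q²` and `Q` is a static solution of self-dual CSS. -/
theorem stmt3 (m : ℕ) (r : ℝ) (hr : 0 < r) :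
    At m (fun s => (Q m s : ℂ)) r = (1 / 2) * Q m r ^ 2 ∧
    -(At m (fun s => (Q m s : ℂ)) r) * Q m r + deriv (deriv (Q m)) r
      + (1 / r) * deriv (Q m) r
      - (((m : ℝ) + Atheta (fun s => (Q m s : ℂ)) r) / r) ^ 2 * Q m r
      + Q m r ^ 3 = 0 :=
  stmt3_general (isBogomolnyi_Q m) (integrableOn_Q_charge m) hr
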